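/- The following orderings hold: p̃ < p_r*; if α < 1 − c_s then p̃ < p_s* and p_sind < p_s*; and if the set S = {p ∈ [0,1] : α·p·q(p) = π_rr(p_r*)} is nonempty, then its greatest element p† satisfies p† ≥ p̃. -/

import Mathlib

/-!
A maximizer of `p * q p` or of `(p - c) * q p` on `[0, 1]` is interior, because the profit is positive
somewhere and vanishes at `1` (`q_pos_of_isMaxOn`, `first_order_condition`). Adding the two optimality
inequalities at the maximizers `t` (cost `0`) and `r` (cost `c > 0`) gives `q r ≤ q t`, hence `t ≤ r`;
if `t = r`, the two first-order conditions together force `c * q' = 0` and then `q t = 0`, which is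
impossible. This is `lt_of_isMaxOn`. It applies to `π_rr` directly and to `π_ss` because
`(1 - α) * p - cs = (1 - α) * (p - cs / (1 - α))` with `cs / (1 - α) < 1` when `α < 1 - cs`.

For the last claim, a solution `pd` of `α * p * q p = V` with `V ≥ 0` satisfies `V ≤ α * t * q t`, while
the left-hand side vanishes at `1`, so the intermediate value theorem gives a solution in `[t, 1]`.
-/

/-- Some price in `(c, 1)` yields positive profit, so a maximizer has positive margin and demand. -/
lemma q_pos_of_isMaxOn {q : ℝ → ℝ} (hanti : StrictAntiOn q (Set.Icc (0:ℝ) 1))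
    (hone : q 1 = 0) {c r : ℝ} (hc0 : 0 ≤ c) (hc1 : c < 1) (hr : r ∈ Set.Icc (0:ℝ) 1)
    (hmax : IsMaxOn (fun p => (p - c) * q p) (Set.Icc (0:ℝ) 1) r) :
    c < r ∧ r < 1 ∧ 0 < q r := by
  have hmid : (c + 1) / 2 ∈ Set.Icc (0:ℝ) 1 := ⟨by linarith, by linarith⟩
  have h1 : (1:ℝ) ∈ Set.Icc (0:ℝ) 1 := ⟨zero_le_one, le_rfl⟩
  have hqm : 0 < q ((c + 1) / 2) := hone ▸ hanti hmid h1 (by linarith)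
  have hpos : 0 < (r - c) * q r :=
    lt_of_lt_of_le (mul_pos (by linarith) hqm) (hmax hmid)
  have hr1 : r < 1 := by
    refine lt_of_le_of_ne hr.2 fun h => ?_
    rw [h, hone, mul_zero] at hpos
    exact lt_irrefl _ hpos
  have hqr : 0 < q r := hone ▸ hanti hr h1 hr1
  exact ⟨sub_pos.1 (pos_of_mul_pos_left hpos hqr.le), hr1, hqr⟩

lemma first_order_condition {q : ℝ → ℝ} (hdiff : Differentiable ℝ q) {c r : ℝ}
    (hr0 : 0 < r) (hr1 : r < 1)
    (hmax : IsMaxOn (fun p => (p - c) * q p) (Set.Icc (0:ℝ) 1) r) :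
    q r + (r - c) * deriv q r = 0 := by
  have hd : HasDerivAt (fun p => (p - c) * q p) (1 * q r + (r - c) * deriv q r) r :=
    ((hasDerivAt_id r).sub_const c).mul (hdiff r).hasDerivAt
  have h := (hmax.isLocalMax (Icc_mem_nhds hr0 hr1)).hasDerivAt_eq_zero hd
  linarith

/-- The profit-maximizing price strictly exceeds both the revenue-maximizing price and the positive
marginal cost. -/
lemma lt_of_isMaxOn {q : ℝ → ℝ} (hdiff : Differentiable ℝ q)
    (hanti : StrictAntiOn q (Set.Icc (0:ℝ) 1)) (hone : q 1 = 0)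
    {c r t : ℝ} (hc0 : 0 < c) (hc1 : c < 1) (hr : r ∈ Set.Icc (0:ℝ) 1)
    (hmax : IsMaxOn (fun p => (p - c) * q p) (Set.Icc (0:ℝ) 1) r)
    (ht : t ∈ Set.Icc (0:ℝ) 1)
    (htmax : IsMaxOn (fun p => p * q p) (Set.Icc (0:ℝ) 1) t) :
    t < r ∧ c < r := by
  obtain ⟨hcr, hr1, hqr⟩ := q_pos_of_isMaxOn hanti hone hc0.le hc1 hr hmax
  refine ⟨?_, hcr⟩
  have e1 : r * q r ≤ t * q t := htmax hr
  have e2 : (t - c) * q t ≤ (r - c) * q r := hmax ht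
  have hq : q r ≤ q t := le_of_mul_le_mul_left (by linarith) hc0
  refine lt_of_le_of_ne ((hanti.le_iff_ge hr ht).1 hq) fun htr => ?_
  subst htr
  have f1 := first_order_condition hdiff (hc0.trans hcr) hr1 hmax
  have f2 := first_order_condition (c := 0) hdiff (hc0.trans hcr) hr1 (by simpa using htmax)
  have hz : deriv q t = 0 := by
    have : c * deriv q t = 0 := by linarith
    exact (mul_eq_zero.1 this).resolve_left hc0.ne'
  rw [hz] at f1
  linarith


noncomputable section

theorem stmt_3
    (q : ℝ → ℝ)
    (hq_diff : Differentiable ℝ q)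
    (hq_diff2 : Differentiable ℝ (deriv q))
    (hq_conc : StrictConcaveOn ℝ (Set.Icc (0:ℝ) 1) q)
    (hq_anti : StrictAntiOn q (Set.Icc (0:ℝ) 1))
    (hq_nonneg : ∀ p ∈ Set.Icc (0:ℝ) 1, 0 ≤ q p)
    (hq_zero : q 0 = 1) (hq_one : q 1 = 0)
    (cr cs α : ℝ) (hcs0 : 0 < cs) (hcsr : cs < cr) (hcr1 : cr < 1)
    (hα : α ∈ Set.Ioo (0:ℝ) 1)
    (prstar : ℝ) (hpr_mem : prstar ∈ Set.Icc (0:ℝ) 1)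
    (hpr_max : IsMaxOn (fun p => (p - cr) * q p) (Set.Icc (0:ℝ) 1) prstar)
    (hpr_uniq : ∀ p ∈ Set.Icc (0:ℝ) 1,
      IsMaxOn (fun p => (p - cr) * q p) (Set.Icc (0:ℝ) 1) p → p = prstar)
    (ptilde : ℝ) (hpt_mem : ptilde ∈ Set.Icc (0:ℝ) 1)
    (hpt_max : IsMaxOn (fun p => p * q p) (Set.Icc (0:ℝ) 1) ptilde)
    (hpt_uniq : ∀ p ∈ Set.Icc (0:ℝ) 1,
      IsMaxOn (fun p => p * q p) (Set.Icc (0:ℝ) 1) p → p = ptilde)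
    (psstar : ℝ)
    (hps : α < 1 - cs →
      psstar ∈ Set.Icc (0:ℝ) 1 ∧
      IsMaxOn (fun p => ((1 - α) * p - cs) * q p) (Set.Icc (0:ℝ) 1) psstar ∧
      ∀ p ∈ Set.Icc (0:ℝ) 1,
        IsMaxOn (fun p => ((1 - α) * p - cs) * q p) (Set.Icc (0:ℝ) 1) p → p = psstar) :
    ptilde < prstar ∧
    (α < 1 - cs → ptilde < psstar ∧ cs / (1 - α) < psstar) ∧
    (∀ pd : ℝ,
      IsGreatest {p : ℝ | p ∈ Set.Icc (0:ℝ) 1 ∧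
        α * p * q p = (prstar - cr) * q prstar} pd →
      ptilde ≤ pd) := by
  have hα1 : 0 < 1 - α := sub_pos.2 hα.2
  refine ⟨(lt_of_isMaxOn hq_diff hq_anti hq_one (hcs0.trans hcsr) hcr1 hpr_mem hpr_max
    hpt_mem hpt_max).1, fun hlt => ?_, fun pd hpd => ?_⟩
  · obtain ⟨hps_mem, hps_max, -⟩ := hps hlt
    refine lt_of_isMaxOn hq_diff hq_anti hq_one (div_pos hcs0 hα1)
      ((div_lt_one hα1).2 (by linarith)) hps_mem (fun p hp => ?_) hpt_mem hpt_max
    -- Dividing `π_ss` by `1 - α > 0` leaves the profit at unit cost `cs / (1 - α)`.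
    have key : ∀ x : ℝ, (1 - α) * ((x - cs / (1 - α)) * q x) = ((1 - α) * x - cs) * q x := by
      intro x
      field_simp
    have h : ((1 - α) * p - cs) * q p ≤ ((1 - α) * psstar - cs) * q psstar := hps_max hp
    rw [← key, ← key] at h
    exact le_of_mul_le_mul_left h hα1
  · obtain ⟨⟨hpd_mem, hpd_eq⟩, hpd_ub⟩ := hpd
    have hV0 : (1 - cr) * q 1 ≤ (prstar - cr) * q prstar :=
      hpr_max (Set.right_mem_Icc.2 zero_le_one)
    have hV1 : pd * q pd ≤ ptilde * q ptilde := hpt_max hpd_mem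
    have hcont : ContinuousOn (fun p => α * p * q p) (Set.Icc ptilde 1) :=
      ((continuous_const.mul continuous_id).mul hq_diff.continuous).continuousOn
    have hV : (prstar - cr) * q prstar ∈
        Set.Icc (α * 1 * q 1) (α * ptilde * q ptilde) := by
      rw [hq_one, mul_zero] at hV0
      refine ⟨by rw [hq_one, mul_zero]; exact hV0, ?_⟩
      rw [← hpd_eq, mul_assoc, mul_assoc]
      exact mul_le_mul_of_nonneg_left hV1 hα.1.le
    obtain ⟨p, hp, hpV⟩ := intermediate_value_Icc' hpt_mem.2 hcont hV
    exact hp.1.trans (hpd_ub ⟨⟨hpt_mem.1.trans hp.1, hp.2⟩, hpV⟩)
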